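/- arXiv:2510.25326 — 2 statements merged into one kernel-verified Lean document; each statement's English description precedes it below -/
import Mathlib

section
/- Let d ≥ 3 be an integer and T > 0. Define Φ(ρ) = (2/ρ)·arctan(ρ/√(d−2)) for ρ > 0, and u_T(t,r) = (1/(T−t))·Φ(r/(T−t)) for t < T and r > 0. Then for every t < T and every r > 0 the identity ∂²_t u_T(t,r) − ∂²_r u_T(t,r) − ((d+1)/r)·∂_r u_T(t,r) = ((d−1)/(2r³))·(2r·u_T(t,r) − sin(2r·u_T(t,r))) holds. In other words, u_T is an exact self-similar solution of the corotational wave maps equation that blows up at the spatial origin as t → T⁻. -/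
/-!
The angle `w = r u = 2 arctan (r / (√(d - 2) (T - t)))` satisfies the first-order equations
`r ∂_r w = sin w` and `(T - t) ∂_t w = sin w`. Differentiating them once more gives
`r² ∂²_r w = sin w (cos w - 1)` and `(T - t)² ∂²_t w = sin w (cos w + 1)`. In terms of `w` the
equation for `u` reads `∂²_t w - ∂²_r w - ((d - 1) / r) ∂_r w + ((d - 1) / (2 r²)) sin (2 w) = 0`,
whose left-hand side is therefore
`sin w * ((1 + cos w) / (T - t)² - (d - 2) (1 - cos w) / r²)`, and the second factor vanishes by
the half-angle formula `tan² (w / 2) = (1 - cos w) / (1 + cos w)`.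
-/

open Filter Topology Real

theorem sin_two_mul_arctan (x : ℝ) : sin (2 * arctan x) = 2 * x / (1 + x ^ 2) := by
  have sin_eq : sin (arctan x) = x * cos (arctan x) := by
    rw [← tan_mul_cos (cos_arctan_pos x).ne', tan_arctan]
  calc sin (2 * arctan x) = 2 * x * cos (arctan x) ^ 2 := by
        rw [sin_two_mul, sin_eq]; ring
    _ = 2 * x / (1 + x ^ 2) := by rw [cos_sq_arctan, mul_one_div]

theorem one_sub_cos_two_mul_arctan (x : ℝ) :
    1 - cos (2 * arctan x) = x ^ 2 * (1 + cos (2 * arctan x)) := by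
  rw [cos_two_mul, cos_sq_arctan]
  field_simp
  ring

theorem hasDerivAt_two_mul_arctan_of_ne_zero {f : ℝ → ℝ} {f' x : ℝ} (hf : HasDerivAt f f' x)
    (hfx : f x ≠ 0) :
    HasDerivAt (fun y => 2 * arctan (f y)) (f' / f x * sin (2 * arctan (f x))) x := by
  refine (hf.arctan.const_mul 2).congr_deriv ?_
  rw [sin_two_mul_arctan]
  field_simp

theorem hasDerivAt_deriv_of_hasDerivAt_mul_sin {w q : ℝ → ℝ} {q' x : ℝ}
    (hw : ∀ᶠ y in 𝓝 x, HasDerivAt w (q y * sin (w y)) y) (hq : HasDerivAt q q' x) :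
    HasDerivAt (deriv w) (sin (w x) * (q' + q x ^ 2 * cos (w x))) x := by
  have deriv_eq : deriv w =ᶠ[𝓝 x] fun y => q y * sin (w y) := hw.mono fun _ h => h.deriv
  refine ((hq.fun_mul hw.self_of_nhds.sin).congr_of_eventuallyEq deriv_eq).congr_deriv ?_
  ring

section QuotientByRadius

variable {𝕜 : Type*} [NontriviallyNormedField 𝕜] {w : 𝕜 → 𝕜} {r : 𝕜}

theorem hasDerivAt_div_id {w' : 𝕜} (hw : HasDerivAt w w' r) (hr : r ≠ 0) :
    HasDerivAt (fun ρ => w ρ / ρ) (w' / r - w r / r ^ 2) r := by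
  refine (hw.fun_div (hasDerivAt_id' r) hr).congr_deriv ?_
  field_simp

theorem hasDerivAt_deriv_div_id {w'' : 𝕜} (hw : ∀ᶠ ρ in 𝓝 r, DifferentiableAt 𝕜 w ρ)
    (hw' : HasDerivAt (deriv w) w'' r) (hr : r ≠ 0) :
    HasDerivAt (deriv fun ρ => w ρ / ρ) (w'' / r - 2 * deriv w r / r ^ 2 + 2 * w r / r ^ 3) r := by
  have deriv_eq : (deriv fun ρ => w ρ / ρ) =ᶠ[𝓝 r] fun ρ => deriv w ρ / ρ - w ρ / ρ ^ 2 := by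
    filter_upwards [hw, eventually_ne_nhds hr] with ρ hwρ hρ
    exact (hasDerivAt_div_id hwρ.hasDerivAt hρ).deriv
  have hquot := (hasDerivAt_div_id hw' hr).fun_sub
    (hw.self_of_nhds.hasDerivAt.fun_div (hasDerivAt_pow 2 r) (pow_ne_zero 2 hr))
  refine (hquot.congr_of_eventuallyEq deriv_eq).congr_deriv ?_
  field_simp
  ring

theorem radial_laplacian_div_id (d : 𝕜) (hw : ∀ᶠ ρ in 𝓝 r, DifferentiableAt 𝕜 w ρ)
    (hw' : DifferentiableAt 𝕜 (deriv w) r) (hr : r ≠ 0) :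
    deriv (deriv fun ρ => w ρ / ρ) r + (d + 1) / r * deriv (fun ρ => w ρ / ρ) r
      = (deriv (deriv w) r + (d - 1) / r * deriv w r - (d - 1) / r ^ 2 * w r) / r := by
  rw [(hasDerivAt_deriv_div_id hw hw'.hasDerivAt hr).deriv,
    (hasDerivAt_div_id hw.self_of_nhds.hasDerivAt hr).deriv]
  field_simp
  ring

end QuotientByRadius

/-- The angle `w = r u` of the self-similar corotational blowup solution `u` with blowup time `T`,
where `c` stands for `√(d - 2)`. -/
noncomputable def blowupAngle (c T t r : ℝ) : ℝ :=
  2 * arctan (r / (c * (T - t)))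

section BlowupAngle

variable {c T t r : ℝ}

theorem hasDerivAt_blowupAngle_radius (hc : c ≠ 0) (ht : t ≠ T) (hr : r ≠ 0) :
    HasDerivAt (fun ρ => blowupAngle c T t ρ) (r⁻¹ * sin (blowupAngle c T t r)) r := by
  have hTt : T - t ≠ 0 := sub_ne_zero.mpr ht.symm
  refine (hasDerivAt_two_mul_arctan_of_ne_zero ((hasDerivAt_id' r).div_const (c * (T - t)))
    (by positivity)).congr_deriv ?_
  rw [blowupAngle]
  congr 1
  field_simp

theorem hasDerivAt_blowupAngle_time (hc : c ≠ 0) (ht : t ≠ T) (hr : r ≠ 0) :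
    HasDerivAt (fun s => blowupAngle c T s r) ((T - t)⁻¹ * sin (blowupAngle c T t r)) t := by
  have hTt : T - t ≠ 0 := sub_ne_zero.mpr ht.symm
  have hden : HasDerivAt (fun s => c * (T - s)) (c * -1) t :=
    ((hasDerivAt_id' t).const_sub T).const_mul c
  refine (hasDerivAt_two_mul_arctan_of_ne_zero
    ((hasDerivAt_const t r).fun_div hden (by positivity)) (by positivity)).congr_deriv ?_
  rw [blowupAngle]
  congr 1
  field_simp
  ring

theorem hasDerivAt_deriv_blowupAngle_radius (hc : c ≠ 0) (ht : t ≠ T) (hr : r ≠ 0) :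
    HasDerivAt (deriv fun ρ => blowupAngle c T t ρ)
      (sin (blowupAngle c T t r) * (cos (blowupAngle c T t r) - 1) / r ^ 2) r := by
  refine (hasDerivAt_deriv_of_hasDerivAt_mul_sin ?_ (hasDerivAt_inv hr)).congr_deriv ?_
  · filter_upwards [eventually_ne_nhds hr] with ρ hρ
    exact hasDerivAt_blowupAngle_radius hc ht hρ
  · field_simp
    ring

theorem hasDerivAt_deriv_blowupAngle_time (hc : c ≠ 0) (ht : t ≠ T) (hr : r ≠ 0) :
    HasDerivAt (deriv fun s => blowupAngle c T s r)
      (sin (blowupAngle c T t r) * (cos (blowupAngle c T t r) + 1) / (T - t) ^ 2) t := by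
  have hTt : T - t ≠ 0 := sub_ne_zero.mpr ht.symm
  refine (hasDerivAt_deriv_of_hasDerivAt_mul_sin ?_
    (((hasDerivAt_id' t).const_sub T).fun_inv hTt)).congr_deriv ?_
  · filter_upwards [eventually_ne_nhds ht] with s hs
    exact hasDerivAt_blowupAngle_time hc hs hr
  · field_simp
    ring

theorem one_sub_cos_blowupAngle_div (hc : c ≠ 0) (hr : r ≠ 0) :
    c ^ 2 * (1 - cos (blowupAngle c T t r)) / r ^ 2
      = (1 + cos (blowupAngle c T t r)) / (T - t) ^ 2 := by
  rw [blowupAngle, one_sub_cos_two_mul_arctan]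
  field_simp

theorem blowupAngle_wave_equation (hc : c ≠ 0) (ht : t ≠ T) (hr : r ≠ 0) :
    deriv (deriv fun s => blowupAngle c T s r) t
      - deriv (deriv fun ρ => blowupAngle c T t ρ) r
      - (c ^ 2 + 1) / r * deriv (fun ρ => blowupAngle c T t ρ) r
      = -((c ^ 2 + 1) / (2 * r ^ 2) * sin (2 * blowupAngle c T t r)) := by
  rw [(hasDerivAt_deriv_blowupAngle_time hc ht hr).deriv,
    (hasDerivAt_deriv_blowupAngle_radius hc ht hr).deriv,
    (hasDerivAt_blowupAngle_radius hc ht hr).deriv, sin_two_mul]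
  linear_combination
    -sin (blowupAngle c T t r) * one_sub_cos_blowupAngle_div (T := T) (t := t) hc hr

theorem blowupAngle_div_radius_wave_equation {d : ℝ} (hd : d = c ^ 2 + 2) (hc : c ≠ 0)
    (ht : t ≠ T) (hr : r ≠ 0) :
    deriv (deriv fun s => blowupAngle c T s r / r) t
      - deriv (deriv fun ρ => blowupAngle c T t ρ / ρ) r
      - (d + 1) / r * deriv (fun ρ => blowupAngle c T t ρ / ρ) r
      = (d - 1) / (2 * r ^ 3)
        * (2 * blowupAngle c T t r - sin (2 * blowupAngle c T t r)) := by
  have hdiff : ∀ᶠ ρ in 𝓝 r, DifferentiableAt ℝ (fun ρ => blowupAngle c T t ρ) ρ := by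
    filter_upwards [eventually_ne_nhds hr] with ρ hρ
    exact (hasDerivAt_blowupAngle_radius hc ht hρ).differentiableAt
  have hlaplacian := radial_laplacian_div_id d hdiff
    (hasDerivAt_deriv_blowupAngle_radius hc ht hr).differentiableAt hr
  have htime : deriv (deriv fun s => blowupAngle c T s r / r) t
      = deriv (deriv fun s => blowupAngle c T s r) t / r := by
    have deriv_eq : (deriv fun s => blowupAngle c T s r / r)
        = fun s => deriv (fun s => blowupAngle c T s r) s / r := funext fun _ => deriv_div_const r
    rw [deriv_eq, deriv_div_const]
  subst hd
  linear_combination htime - hlaplacian + blowupAngle_wave_equation hc ht hr / r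

end BlowupAngle

theorem stmt_0_general (d : ℝ) (hd : 2 < d) (T : ℝ)
    (Φ : ℝ → ℝ)
    (hΦ : ∀ ρ : ℝ, 0 < ρ → Φ ρ = 2 / ρ * arctan (ρ / √(d - 2)))
    (u : ℝ → ℝ → ℝ)
    (hu : ∀ t r : ℝ, t < T → 0 < r → u t r = (1 / (T - t)) * Φ (r / (T - t)))
    (t r : ℝ) (ht : t < T) (hr : 0 < r) :
    deriv (fun s => deriv (fun s' => u s' r) s) t
      - deriv (fun ρ => deriv (fun ρ' => u t ρ') ρ) r
      - (d + 1) / r * deriv (fun ρ => u t ρ) r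
      = (d - 1) / (2 * r ^ 3) * (2 * r * u t r - sin (2 * r * u t r)) := by
  have hc : 0 < √(d - 2) := sqrt_pos.mpr (sub_pos.mpr hd)
  have hdc : d = √(d - 2) ^ 2 + 2 := by rw [sq_sqrt (sub_pos.mpr hd).le]; ring
  have u_eq : ∀ s ρ : ℝ, s < T → 0 < ρ → u s ρ = blowupAngle √(d - 2) T s ρ / ρ := by
    intro s ρ hs hρ
    have hTs : 0 < T - s := sub_pos.mpr hs
    rw [hu s ρ hs hρ, hΦ _ (div_pos hρ hTs), blowupAngle, div_div, mul_comm (T - s)]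
    field_simp
  have htime : (fun s => u s r) =ᶠ[𝓝 t] fun s => blowupAngle √(d - 2) T s r / r :=
    (eventually_lt_nhds ht).mono fun s hs => u_eq s r hs hr
  have hradius : (fun ρ => u t ρ) =ᶠ[𝓝 r] fun ρ => blowupAngle √(d - 2) T t ρ / ρ :=
    (eventually_gt_nhds hr).mono fun ρ hρ => u_eq t ρ ht hρ
  have hangle : 2 * r * u t r = 2 * blowupAngle √(d - 2) T t r := by
    rw [u_eq t r ht hr]; field_simp
  rw [htime.deriv.deriv_eq, hradius.deriv.deriv_eq, hradius.deriv_eq, hangle]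
  exact blowupAngle_div_radius_wave_equation hdc hc.ne' ht.ne hr.ne'

/-- the explicit Turok–Spergel / Bizoń–Biernat profile
`u_T(t,r) = (1/(T−t))·Φ(r/(T−t))`, `Φ(ρ) = (2/ρ)·arctan(ρ/√(d−2))`,
solves the corotational wave maps equation
`∂²_t u − ∂²_r u − ((d+1)/r)∂_r u = ((d−1)/(2r³))(2ru − sin(2ru))`
for all `t < T`, `r > 0`. -/
theorem stmt_0 (d : ℕ) (hd : 3 ≤ d) (T : ℝ) (hT : 0 < T)
    (Φ : ℝ → ℝ)
    (hΦ : ∀ ρ : ℝ, 0 < ρ → Φ ρ = 2 / ρ * Real.arctan (ρ / Real.sqrt ((d : ℝ) - 2)))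
    (u : ℝ → ℝ → ℝ)
    (hu : ∀ t r : ℝ, t < T → 0 < r → u t r = (1 / (T - t)) * Φ (r / (T - t)))
    (t r : ℝ) (ht : t < T) (hr : 0 < r) :
    deriv (fun s => deriv (fun s' => u s' r) s) t
      - deriv (fun ρ => deriv (fun ρ' => u t ρ') ρ) r
      - ((d : ℝ) + 1) / r * deriv (fun ρ => u t ρ) r
      = ((d : ℝ) - 1) / (2 * r ^ 3) * (2 * r * u t r - Real.sin (2 * r * u t r)) := by
  exact stmt_0_general d (by exact_mod_cast hd) T Φ hΦ u hu t r ht hr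
end

section
/- Let n ≥ 5 be an integer. Define g: ℝⁿ → ℝ by g(ξ) = 1/(|ξ|² + n − 4), and ĝ(ξ) = ξ·∇g(ξ) + 2g(ξ). Then for every ξ ∈ ℝⁿ both of the following hold: (i) −g(ξ) − ξ·∇g(ξ) + ĝ(ξ) = g(ξ); (ii) Δg(ξ) − 2ĝ(ξ) − ξ·∇ĝ(ξ) + (8(n−4)(n−3)/(|ξ|² + n − 4)²)·g(ξ) = ĝ(ξ). That is, the pair (g, ĝ) is an eigenfunction with eigenvalue 1 of the linearized operator in similarity variables. -/
/-- The Laplacian on `ℝⁿ`, as the sum of the second partial derivatives along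
the standard coordinate directions. -/
noncomputable def lapl {n : ℕ} (f : EuclideanSpace ℝ (Fin n) → ℝ)
    (x : EuclideanSpace ℝ (Fin n)) : ℝ :=
  ∑ i : Fin n,
    fderiv ℝ (fun y => fderiv ℝ f y (EuclideanSpace.single i 1)) x
      (EuclideanSpace.single i 1)

/-!
Everything is a function of `s = |ξ|²`: for a radial function `f = φ(|ξ|²)` one has
`ξ·∇f = 2sφ'(s)` and `Δf = 2nφ'(s) + 4sφ''(s)`. With `a = n - 4`, so that `g = 1/(s + a)`, this
gives `ĝ = 2a/(s + a)²`, and multiplying (ii) by `(s + a)³` leaves an identity between linear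
polynomials in `s`: the coefficients of `s` agree exactly because `a = n - 4`, and the constant
terms dictate the factor `8(n - 4)(n - 3)` of the potential.
-/

open Filter
open scoped Topology

section Radial

variable {E : Type*} [NormedAddCommGroup E] [InnerProductSpace ℝ E]
  {φ φ' : ℝ → ℝ} {d : ℝ} {x : E}

theorem hasFDerivAt_comp_norm_sq (hφ : HasDerivAt φ d (‖x‖ ^ 2)) :
    HasFDerivAt (fun y : E => φ (‖y‖ ^ 2)) ((2 * d) • innerSL ℝ x) x := by
  refine (hφ.comp_hasFDerivAt x (hasStrictFDerivAt_norm_sq x).hasFDerivAt).congr_fderiv ?_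
  ext v
  simp only [smul_apply, coe_innerSL_apply, nsmul_eq_mul, Nat.cast_ofNat, smul_eq_mul]
  ring

theorem fderiv_comp_norm_sq_apply (hφ : HasDerivAt φ d (‖x‖ ^ 2)) (v : E) :
    fderiv ℝ (fun y : E => φ (‖y‖ ^ 2)) x v = 2 * d * inner ℝ x v := by
  simp [(hasFDerivAt_comp_norm_sq hφ).fderiv]

theorem fderiv_fderiv_comp_norm_sq_apply (hφ : ∀ᶠ s in 𝓝 (‖x‖ ^ 2), HasDerivAt φ (φ' s) s)
    (hφ' : HasDerivAt φ' d (‖x‖ ^ 2)) (v w : E) :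
    fderiv ℝ (fun y => fderiv ℝ (fun z : E => φ (‖z‖ ^ 2)) y v) x w =
      2 * φ' (‖x‖ ^ 2) * inner ℝ v w + 4 * d * inner ℝ x v * inner ℝ x w := by
  have first_deriv : (fun y => fderiv ℝ (fun z : E => φ (‖z‖ ^ 2)) y v) =ᶠ[𝓝 x]
      fun y => 2 * (φ' (‖y‖ ^ 2) * innerSL ℝ v y) := by
    have tendsto_norm_sq : Tendsto (fun y : E => ‖y‖ ^ 2) (𝓝 x) (𝓝 (‖x‖ ^ 2)) :=
      (continuous_norm.pow 2).tendsto x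
    filter_upwards [tendsto_norm_sq.eventually hφ] with y hy
    rw [fderiv_comp_norm_sq_apply hy, innerSL_apply_apply, real_inner_comm, mul_assoc]
  have second_deriv :=
    ((hasFDerivAt_comp_norm_sq hφ').fun_mul (innerSL ℝ v).hasFDerivAt).const_mul 2
  rw [first_deriv.fderiv_eq, second_deriv.fderiv]
  simp only [coe_innerSL_apply, real_inner_comm x v, smul_add, add_apply, smul_apply,
    smul_eq_mul]
  ring

end Radial

theorem lapl_comp_norm_sq {n : ℕ} {φ φ' : ℝ → ℝ} {d : ℝ} {x : EuclideanSpace ℝ (Fin n)}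
    (hφ : ∀ᶠ s in 𝓝 (‖x‖ ^ 2), HasDerivAt φ (φ' s) s) (hφ' : HasDerivAt φ' d (‖x‖ ^ 2)) :
    lapl (fun y => φ (‖y‖ ^ 2)) x = 2 * n * φ' (‖x‖ ^ 2) + 4 * d * ‖x‖ ^ 2 := by
  have second_partial (i : Fin n) :
      fderiv ℝ (fun y => fderiv ℝ (fun z => φ (‖z‖ ^ 2)) y (EuclideanSpace.single i 1)) x
        (EuclideanSpace.single i 1) = 2 * φ' (‖x‖ ^ 2) + 4 * d * x i ^ 2 := by
    rw [fderiv_fderiv_comp_norm_sq_apply hφ hφ']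
    simp only [EuclideanSpace.inner_single_right, PiLp.single_apply, if_true, one_mul, map_one,
      conj_trivial]
    ring
  simp only [lapl, second_partial, Finset.sum_add_distrib, ← Finset.mul_sum,
    EuclideanSpace.real_norm_sq_eq x, Finset.sum_const, Finset.card_univ, Fintype.card_fin,
    nsmul_eq_mul]
  ring

theorem hasDerivAt_one_div_add_pow {s a : ℝ} (hs : s + a ≠ 0) (m : ℕ) :
    HasDerivAt (fun t => 1 / (t + a) ^ m) (-m / (s + a) ^ (m + 1)) s := by
  have zpow_deriv := (hasDerivAt_zpow (-m : ℤ) (s + a) (.inl hs)).comp_add_const s a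
  have exponent : (-m : ℤ) - 1 = -((m + 1 : ℕ) : ℤ) := by push_cast; ring
  simpa only [exponent, zpow_neg, zpow_natCast, ← one_div, Int.cast_neg, Int.cast_natCast,
    mul_one_div] using zpow_deriv

section InversePower

variable {E : Type*} [NormedAddCommGroup E] [InnerProductSpace ℝ E] {a : ℝ} {x : E}

theorem fderiv_one_div_norm_sq_add_pow_apply (hx : ‖x‖ ^ 2 + a ≠ 0) (m : ℕ) (v : E) :
    fderiv ℝ (fun y : E => 1 / (‖y‖ ^ 2 + a) ^ m) x v =
      -2 * m * inner ℝ x v / (‖x‖ ^ 2 + a) ^ (m + 1) := by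
  rw [fderiv_comp_norm_sq_apply (hasDerivAt_one_div_add_pow hx m)]
  ring

theorem fderiv_one_div_norm_sq_add_pow_apply_self_add (hx : ‖x‖ ^ 2 + a ≠ 0) (m : ℕ) :
    fderiv ℝ (fun y : E => 1 / (‖y‖ ^ 2 + a) ^ m) x x + 2 * m * (1 / (‖x‖ ^ 2 + a) ^ m) =
      2 * m * a * (1 / (‖x‖ ^ 2 + a) ^ (m + 1)) := by
  rw [fderiv_one_div_norm_sq_add_pow_apply hx, real_inner_self_eq_norm_sq]
  field_simp
  ring

end InversePower

theorem lapl_one_div_norm_sq_add_pow {n : ℕ} {a : ℝ} {x : EuclideanSpace ℝ (Fin n)}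
    (hx : ‖x‖ ^ 2 + a ≠ 0) (m : ℕ) :
    lapl (fun y => 1 / (‖y‖ ^ 2 + a) ^ m) x =
      -2 * m * n / (‖x‖ ^ 2 + a) ^ (m + 1) +
        4 * m * (m + 1) * ‖x‖ ^ 2 / (‖x‖ ^ 2 + a) ^ (m + 2) := by
  have first_deriv : ∀ᶠ s in 𝓝 (‖x‖ ^ 2),
      HasDerivAt (fun t => 1 / (t + a) ^ m) (-m * (1 / (s + a) ^ (m + 1))) s := by
    filter_upwards [(continuous_add_const a).continuousAt.eventually_ne hx] with s hs
    simpa only [mul_one_div] using hasDerivAt_one_div_add_pow hs m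
  have second_deriv := (hasDerivAt_one_div_add_pow hx (m + 1)).const_mul (-m : ℝ)
  rw [lapl_comp_norm_sq first_deriv second_deriv]
  push_cast
  ring

theorem stmt_6_general (n : ℕ) (g ghat : EuclideanSpace ℝ (Fin n) → ℝ)
    (hg : ∀ ξ : EuclideanSpace ℝ (Fin n), g ξ = 1 / (‖ξ‖ ^ 2 + (n : ℝ) - 4))
    (hghat : ∀ ξ : EuclideanSpace ℝ (Fin n), ghat ξ = fderiv ℝ g ξ ξ + 2 * g ξ)
    (ξ : EuclideanSpace ℝ (Fin n)) (hξ : ‖ξ‖ ^ 2 + (n : ℝ) - 4 ≠ 0) :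
    (-g ξ - fderiv ℝ g ξ ξ + ghat ξ = g ξ) ∧
      (lapl g ξ - 2 * ghat ξ - fderiv ℝ ghat ξ ξ
          + (8 * ((n : ℝ) - 4) * ((n : ℝ) - 3) / (‖ξ‖ ^ 2 + (n : ℝ) - 4) ^ 2) * g ξ
        = ghat ξ) := by
  refine ⟨by rw [hghat]; ring, ?_⟩
  obtain ⟨a, ha⟩ : ∃ a : ℝ, a = n - 4 := ⟨_, rfl⟩
  simp only [add_sub_assoc, ← ha] at hg hξ ⊢
  have g_eq : g = fun x => 1 / (‖x‖ ^ 2 + a) ^ 1 := by simpa only [pow_one] using funext hg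
  have ghat_eventuallyEq : ghat =ᶠ[𝓝 ξ] fun x => 2 * a * (1 / (‖x‖ ^ 2 + a) ^ 2) := by
    have denominator_ne_zero : ∀ᶠ x in 𝓝 ξ, ‖x‖ ^ 2 + a ≠ 0 :=
      ((continuous_norm.pow 2).add_const a).continuousAt.eventually_ne hξ
    filter_upwards [denominator_ne_zero] with x hx
    simpa [hghat, g_eq] using fderiv_one_div_norm_sq_add_pow_apply_self_add hx 1
  have fderiv_ghat : fderiv ℝ ghat ξ ξ = -8 * a * ‖ξ‖ ^ 2 / (‖ξ‖ ^ 2 + a) ^ 3 := by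
    have differentiableAt_one_div_sq :=
      (hasFDerivAt_comp_norm_sq (hasDerivAt_one_div_add_pow hξ 2)).differentiableAt
    rw [ghat_eventuallyEq.fderiv_eq, fderiv_const_mul differentiableAt_one_div_sq, smul_apply,
      fderiv_one_div_norm_sq_add_pow_apply hξ, real_inner_self_eq_norm_sq, smul_eq_mul]
    ring
  rw [fderiv_ghat, ghat_eventuallyEq.eq_of_nhds, g_eq, lapl_one_div_norm_sq_add_pow hξ,
    show (n : ℝ) = a + 4 by linarith]
  field_simp
  ring

/-- the pair `(g, ĝ)` with `g(ξ) = 1/(|ξ|² + n − 4)` and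
`ĝ = ξ·∇g + 2g` is an eigenfunction with eigenvalue `1` of the linearized
operator in similarity variables:
(i) `−g − ξ·∇g + ĝ = g`;
(ii) `Δg − 2ĝ − ξ·∇ĝ + V·g = ĝ` with `V(ξ) = 8(n−4)(n−3)/(|ξ|² + n − 4)²`. -/
theorem stmt_6 (n : ℕ) (hn : 5 ≤ n)
    (g ghat : EuclideanSpace ℝ (Fin n) → ℝ)
    (hg : ∀ ξ : EuclideanSpace ℝ (Fin n), g ξ = 1 / (‖ξ‖ ^ 2 + (n : ℝ) - 4))
    (hghat : ∀ ξ : EuclideanSpace ℝ (Fin n), ghat ξ = fderiv ℝ g ξ ξ + 2 * g ξ) :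
    ∀ ξ : EuclideanSpace ℝ (Fin n),
      (-g ξ - fderiv ℝ g ξ ξ + ghat ξ = g ξ) ∧
      (lapl g ξ - 2 * ghat ξ - fderiv ℝ ghat ξ ξ
          + (8 * ((n : ℝ) - 4) * ((n : ℝ) - 3) / (‖ξ‖ ^ 2 + (n : ℝ) - 4) ^ 2) * g ξ
        = ghat ξ) := by
  intro ξ
  have denominator_pos : 0 < ‖ξ‖ ^ 2 + (n : ℝ) - 4 := by
    linarith [sq_nonneg ‖ξ‖, show (5 : ℝ) ≤ n by exact_mod_cast hn]
  exact stmt_6_general n g ghat hg hghat ξ denominator_pos.ne'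
end
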